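/- Let d ≥ 3 be an integer and let T be a set of three affinely independent points in ℕ_0^d. Then the 2-completion of T satisfies E_2^∞(T) = Λ(T) ∩ ℕ_0^d. -/

import Mathlib

open MeasureTheory
open scoped Classical ENNReal

noncomputable section

/-- The `d`-dimensional torus, modelled as `d` copies of `ℝ/ℤ`,
whose product `volume` measure is the normalized Haar measure. -/
abbrev Torus (d : ℕ) := Fin d → AddCircle (1 : ℝ)

/-- The character `z ↦ z^α` on the torus. -/
def torusChar {d : ℕ} (α : Fin d → ℤ) (x : Torus d) : ℂ :=
  ∏ j, fourier (α j) (x j)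

/-- The trigonometric polynomial with frequencies in `F` and coefficients `a`. -/
def trigPoly {d : ℕ} (F : Finset (Fin d → ℤ)) (a : (Fin d → ℤ) → ℂ) (x : Torus d) : ℂ :=
  ∑ α ∈ F, a α * torusChar α x

/-- The set `ℕ₀^d` of multi-indices with nonnegative entries. -/
def NN (d : ℕ) : Set (Fin d → ℤ) := {α | ∀ j, 0 ≤ α j}

/-- `Λ` is a coset in `ℤ^d`, i.e. a translate of a subgroup. -/
def IsCoset {d : ℕ} (Λ : Set (Fin d → ℤ)) : Prop :=
  ∃ (x : Fin d → ℤ) (H : AddSubgroup (Fin d → ℤ)),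
    Λ = (x + ·) '' (H : Set (Fin d → ℤ))

/-- `Λ` is a contractive projection set for `L^p(𝕋^d)`:
the projection onto frequencies in `Λ` is contractive on trigonometric polynomials. -/
def IsContractiveLp (d : ℕ) (p : ℝ≥0∞) (Λ : Set (Fin d → ℤ)) : Prop :=
  ∀ (F : Finset (Fin d → ℤ)) (a : (Fin d → ℤ) → ℂ),
    eLpNorm (trigPoly (F.filter (· ∈ Λ)) a) p volume ≤ eLpNorm (trigPoly F a) p volume

/-- `Γ` is a contractive projection set for `H^p(𝕋^d)`:
the projection onto frequencies in `Γ` is contractive on analytic polynomials. -/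
def IsContractiveHp (d : ℕ) (p : ℝ≥0∞) (Γ : Set (Fin d → ℤ)) : Prop :=
  ∀ F : Finset (Fin d → ℤ), ↑F ⊆ NN d → ∀ a : (Fin d → ℤ) → ℂ,
    eLpNorm (trigPoly (F.filter (· ∈ Γ)) a) p volume ≤ eLpNorm (trigPoly F a) p volume

/-- `Γ` has dimension `k`: the subgroup generated by the differences `γ - γ₀` has rank `k`. -/
def HasDim {d : ℕ} (Γ : Set (Fin d → ℤ)) (k : ℕ) : Prop :=
  ∀ γ₀ ∈ Γ, Module.finrank ℤ (Submodule.span ℤ ((· - γ₀) '' Γ)) = k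

/-- `H^p(𝕋^d)` enjoys the contractive restriction property of dimension `k`:
every `k`-dimensional contractive projection set for `H^p(𝕋^d)` is the restriction
of a coset in `ℤ^d` to `ℕ₀^d`. -/
def ContractiveRestrictionProperty (d : ℕ) (p : ℝ≥0∞) (k : ℕ) : Prop :=
  ∀ Γ : Set (Fin d → ℤ), Γ.Nonempty → Γ ⊆ NN d → HasDim Γ k → IsContractiveHp d p Γ →
    ∃ Λ : Set (Fin d → ℤ), IsCoset Λ ∧ Γ = Λ ∩ NN d

/-- The coset `Λ(Γ)` in `ℤ^d` generated by `Γ`. -/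
def cosetGen {d : ℕ} (Γ : Set (Fin d → ℤ)) : Set (Fin d → ℤ) :=
  ⋃ γ₀ ∈ Γ, (γ₀ + ·) '' (AddSubgroup.closure ((· - γ₀) '' Γ) : Set (Fin d → ℤ))

/-- The `n`-extension `E_n(Γ)`: all points of `Λ(Γ) ∩ ℕ₀^d` at distance at most `n` from `Γ`. -/
def Eext {d : ℕ} (n : ℕ) (Γ : Set (Fin d → ℤ)) : Set (Fin d → ℤ) :=
  {lam | lam ∈ cosetGen Γ ∩ NN d ∧ ∃ γ ∈ Γ, ∃ m : (Fin d → ℤ) →₀ ℤ,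
    (↑m.support : Set (Fin d → ℤ)) ⊆ Γ \ {γ} ∧
    lam = γ + ∑ α ∈ m.support, m α • (α - γ) ∧
    (∑ α ∈ m.support, max (m α) 0) ≤ (n : ℤ) ∧
    (∑ α ∈ m.support, max (-(m α)) 0) ≤ (n : ℤ)}

/-- Iterated `n`-extensions `E_n^k(Γ)`. -/
def EextIter {d : ℕ} (n : ℕ) : ℕ → Set (Fin d → ℤ) → Set (Fin d → ℤ)
  | 0, Γ => Eext n Γ
  | (k + 1), Γ => Eext n (EextIter n k Γ)

/-- The `n`-completion `E_n^∞(Γ)`. -/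
def EextInf {d : ℕ} (n : ℕ) (Γ : Set (Fin d → ℤ)) : Set (Fin d → ℤ) :=
  ⋃ k, EextIter n k Γ

/-!
Call `C ⊆ ℕ₀^d` closed if `E_n(C) ⊆ C`, where `n ≥ 2`; the completion is the least closed set
containing `T`. If `C` is closed and `p, q, r ∈ C`, then each of `q + r - p`, `2r - p` and
`3r - p - q` lies in `C` as soon as it is nonnegative.

Let `x = a p + b q + c r` be nonnegative with `a ≤ b ≤ c` and `a + b + c = 1`. If `b ≤ 0`, then `x`
lies in the cone at `r` opposite to `p` and `q`. Replacing `p` by `2r - p` (if `a < b`) or by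
`3r - p - q` (if `a = b`) puts `x` in such an opposite cone at the new point, with a smaller
positive coordinate. If `b > 0`, one replacement of `p` by `q + r - p` leads to the first case.
Each new point is nonnegative because a positive multiple of it is the sum of `x` and nonnegative
multiples of old points.
-/

section

variable {d : ℕ} {Γ Γ' : Set (Fin d → ℤ)} {n : ℕ}

theorem sub_mem_of_mem_cosetGen {H : AddSubgroup (Fin d → ℤ)} {t x : Fin d → ℤ}
    (hΓ : ∀ γ ∈ Γ, γ - t ∈ H) (hx : x ∈ cosetGen Γ) : x - t ∈ H := by
  simp only [cosetGen, Set.mem_iUnion, Set.mem_image] at hx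
  obtain ⟨γ, hγ, y, hy, rfl⟩ := hx
  have closure_le : AddSubgroup.closure ((· - γ) '' Γ) ≤ H := by
    rw [AddSubgroup.closure_le]
    rintro _ ⟨α, hα, rfl⟩
    simpa using H.sub_mem (hΓ α hα) (hΓ γ hγ)
  rw [add_sub_right_comm]
  exact H.add_mem (hΓ γ hγ) (closure_le hy)

theorem mem_cosetGen_iff {γ x : Fin d → ℤ} (hγ : γ ∈ Γ) :
    x ∈ cosetGen Γ ↔ x - γ ∈ AddSubgroup.closure ((· - γ) '' Γ) := by
  refine ⟨sub_mem_of_mem_cosetGen fun α hα => AddSubgroup.subset_closure ⟨α, hα, rfl⟩, fun hx => ?_⟩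
  simp only [cosetGen, Set.mem_iUnion, Set.mem_image]
  exact ⟨γ, hγ, x - γ, hx, add_sub_cancel γ x⟩

theorem cosetGen_subset_cosetGen (hΓ : Γ.Nonempty) (h : Γ' ⊆ cosetGen Γ) :
    cosetGen Γ' ⊆ cosetGen Γ := by
  obtain ⟨γ, hγ⟩ := hΓ
  intro x hx
  rw [mem_cosetGen_iff hγ]
  exact sub_mem_of_mem_cosetGen (fun α hα => (mem_cosetGen_iff hγ).1 (h hα)) hx

theorem exists_sum_smul_of_mem_cosetGen_range {ι : Type*} [Fintype ι] {t : ι → Fin d → ℤ}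
    {x : Fin d → ℤ} (hx : x ∈ cosetGen (Set.range t)) :
    ∃ a : ι → ℤ, ∑ i, a i = 1 ∧ x = ∑ i, a i • t i := by
  simp only [cosetGen, Set.mem_iUnion, Set.mem_image] at hx
  obtain ⟨_, ⟨i, rfl⟩, y, hy, rfl⟩ := hx
  obtain ⟨a, ha, rfl⟩ : ∃ a : ι → ℤ, ∑ j, a j = 0 ∧ y = ∑ j, a j • t j := by
    induction hy using AddSubgroup.closure_induction with
    | mem y hy =>
      obtain ⟨_, ⟨j, rfl⟩, rfl⟩ := hy
      exact ⟨Pi.single j 1 - Pi.single i 1, by simp,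
        by simp [sub_smul, Pi.single_apply, Finset.sum_sub_distrib, ite_smul]⟩
    | zero => exact ⟨0, by simp, by simp⟩
    | add y z _ _ hy hz =>
      obtain ⟨a, ha, rfl⟩ := hy
      obtain ⟨b, hb, rfl⟩ := hz
      exact ⟨a + b, by simp [Finset.sum_add_distrib, ha, hb],
        by simp [add_smul, Finset.sum_add_distrib]⟩
    | neg y _ hy =>
      obtain ⟨a, ha, rfl⟩ := hy
      exact ⟨-a, by simp [ha], by simp⟩
  exact ⟨Pi.single i 1 + a, by simp [Finset.sum_add_distrib, ha],
    by simp [add_smul, Pi.single_apply, Finset.sum_add_distrib, ite_smul]⟩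

theorem mem_Eext_of_finsupp {γ : Fin d → ℤ} (hγ : γ ∈ Γ) {f : (Fin d → ℤ) →₀ ℤ}
    (hf : ↑f.support ⊆ Γ) (hpos : ∑ α ∈ f.support, max (f α) 0 ≤ n)
    (hneg : ∑ α ∈ f.support, max (-f α) 0 ≤ n)
    (hx : γ + ∑ α ∈ f.support, f α • (α - γ) ∈ NN d) :
    γ + ∑ α ∈ f.support, f α • (α - γ) ∈ Eext n Γ := by
  have sum_erase {M : Type} [AddCommMonoid M] (g : (Fin d → ℤ) → ℤ → M) :
      ∑ α ∈ f.support.erase γ, g α (f.erase γ α) = ∑ α ∈ f.support.erase γ, g α (f α) :=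
    Finset.sum_congr rfl fun α hα => by rw [Finsupp.erase_ne (Finset.ne_of_mem_erase hα)]
  have sum_erase_le (g : ℤ → ℤ) (hg : ∀ k, 0 ≤ g k) :
      ∑ α ∈ f.support.erase γ, g (f α) ≤ ∑ α ∈ f.support, g (f α) :=
    Finset.sum_le_sum_of_subset_of_nonneg (Finset.erase_subset _ _) fun _ _ _ => hg _
  have mem_coset : γ + ∑ α ∈ f.support, f α • (α - γ) ∈ cosetGen Γ := by
    rw [mem_cosetGen_iff hγ, add_sub_cancel_left]
    exact sum_mem fun α hα =>
      zsmul_mem (AddSubgroup.subset_closure (Set.mem_image_of_mem _ (hf hα))) _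
  refine ⟨⟨mem_coset, hx⟩, γ, hγ, f.erase γ, ?_, ?_, ?_, ?_⟩
  · rw [Finsupp.support_erase, Finset.coe_erase]
    exact Set.sdiff_subset_sdiff_left hf
  · rw [Finsupp.support_erase, sum_erase fun α k => k • (α - γ), Finset.sum_erase _ (by simp)]
  · rw [Finsupp.support_erase, sum_erase fun _ k => max k 0]
    exact (sum_erase_le (max · 0) fun _ => le_max_right _ _).trans hpos
  · rw [Finsupp.support_erase, sum_erase fun _ k => max (-k) 0]
    exact (sum_erase_le (max (-·) 0) fun _ => le_max_right _ _).trans hneg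

theorem sum_count_zsmul_of_subset {α M : Type*} [DecidableEq α] [AddCommGroup M] {Q : Multiset α}
    {s : Finset α} (hQ : Q.toFinset ⊆ s) (g : α → M) :
    ∑ a ∈ s, (Q.count a : ℤ) • g a = (Q.map g).sum := by
  simp only [natCast_zsmul]
  rw [Finset.sum_multiset_map_count]
  exact (Finset.sum_subset hQ fun a _ ha => by simp_all).symm

theorem mem_Eext_of_multiset {γ : Fin d → ℤ} (hγ : γ ∈ Γ) {P N : Multiset (Fin d → ℤ)}
    (hP : ∀ α ∈ P, α ∈ Γ) (hN : ∀ α ∈ N, α ∈ Γ) (hPn : P.card ≤ n) (hNn : N.card ≤ n)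
    (hx : γ + ((P.map (· - γ)).sum - (N.map (· - γ)).sum) ∈ NN d) :
    γ + ((P.map (· - γ)).sum - (N.map (· - γ)).sum) ∈ Eext n Γ := by
  let s := P.toFinset ∪ N.toFinset
  let f : (Fin d → ℤ) →₀ ℤ := Finsupp.onFinset s (fun α => P.count α - N.count α) fun α hα => by
    contrapose! hα
    simp_all [s]
  have hPs : P.toFinset ⊆ s := Finset.subset_union_left
  have hNs : N.toFinset ⊆ s := Finset.subset_union_right
  have hfs : f.support ⊆ s := Finsupp.support_onFinset_subset
  have sum_le_card (g : ℤ → ℤ) (Q : Multiset (Fin d → ℤ)) (hQ : Q.toFinset ⊆ s)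
      (hg : ∀ α, g (f α) ≤ Q.count α) : ∑ α ∈ f.support, g (f α) ≤ Q.card :=
    calc ∑ α ∈ f.support, g (f α) ≤ ∑ α ∈ f.support, (Q.count α : ℤ) :=
          Finset.sum_le_sum fun α _ => hg α
      _ ≤ ∑ α ∈ s, (Q.count α : ℤ) :=
          Finset.sum_le_sum_of_subset_of_nonneg hfs fun _ _ _ => Nat.cast_nonneg _
      _ = Q.card := mod_cast Multiset.sum_count_eq_card fun α hα =>
          hQ (Multiset.mem_toFinset.2 hα)
  have sum_eq : ∑ α ∈ f.support, f α • (α - γ) = (P.map (· - γ)).sum - (N.map (· - γ)).sum := by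
    rw [← sum_count_zsmul_of_subset hPs, ← sum_count_zsmul_of_subset hNs,
      ← Finset.sum_sub_distrib]
    simp only [← sub_smul]
    exact Finset.sum_subset hfs fun α _ hα => by simp [Finsupp.notMem_support_iff.1 hα]
  rw [← sum_eq] at hx ⊢
  refine mem_Eext_of_finsupp hγ (fun α hα => ?_) ?_ ?_ hx
  · rcases Finset.mem_union.1 (hfs hα) with h | h
    · exact hP α (Multiset.mem_toFinset.1 h)
    · exact hN α (Multiset.mem_toFinset.1 h)
  · exact (sum_le_card (max · 0) P hPs fun α => by simp [f]).trans (mod_cast hPn)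
  · exact (sum_le_card (max (-·) 0) N hNs fun α => by simp [f]).trans (mod_cast hNn)

theorem subset_Eext (h : Γ ⊆ NN d) : Γ ⊆ Eext n Γ := fun γ hγ => by
  simpa using mem_Eext_of_finsupp (n := n) (f := 0) hγ (by simp) (by simp) (by simp)
    (by simpa using h hγ)

theorem EextIter_subset_NN (k : ℕ) : EextIter n k Γ ⊆ NN d := by
  cases k <;> exact fun _ hx => hx.1.2

theorem monotone_EextIter : Monotone fun k => EextIter n k Γ :=
  monotone_nat_of_le_succ fun k => subset_Eext (EextIter_subset_NN k)

theorem EextIter_subset_cosetGen (hΓ : Γ.Nonempty) (k : ℕ) : EextIter n k Γ ⊆ cosetGen Γ := by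
  induction k with
  | zero => exact fun _ hx => hx.1.1
  | succ k ih => exact fun _ hx => cosetGen_subset_cosetGen hΓ ih hx.1.1

theorem subset_EextInf (h : Γ ⊆ NN d) : Γ ⊆ EextInf n Γ :=
  (subset_Eext h).trans (Set.subset_iUnion (fun k => EextIter n k Γ) 0)

theorem EextInf_subset_NN : EextInf n Γ ⊆ NN d :=
  Set.iUnion_subset EextIter_subset_NN

theorem EextInf_subset_cosetGen (hΓ : Γ.Nonempty) : EextInf n Γ ⊆ cosetGen Γ :=
  Set.iUnion_subset (EextIter_subset_cosetGen hΓ)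

theorem Eext_EextInf_subset : Eext n (EextInf n Γ) ⊆ EextInf n Γ := by
  rintro _ ⟨⟨-, hx⟩, γ, hγ, m, hm, rfl, hpos, hneg⟩
  have insert_subset : ↑(insert γ m.support) ⊆ ⋃ k, EextIter n k Γ := by
    rw [Finset.coe_insert]
    exact Set.insert_subset hγ (hm.trans Set.sdiff_subset)
  obtain ⟨k, hk⟩ := monotone_EextIter.directed_le.exists_mem_subset_of_finset_subset_biUnion
    insert_subset
  rw [Finset.coe_insert, Set.insert_subset_iff] at hk
  exact Set.mem_iUnion.2 ⟨k + 1, mem_Eext_of_finsupp hk.1 hk.2 hpos hneg hx⟩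

end

section

variable {d n : ℕ} {C : Set (Fin d → ℤ)} {p q r x : Fin d → ℤ}

theorem mem_NN_of_add_nsmul_eq {k l : ℕ} (hx : x ∈ NN d) (hq : q ∈ NN d) (hr : r ∈ NN d)
    (h : x + k • q + l • r = (k + l + 1) • p) : p ∈ NN d := fun j => by
  refine (nsmul_nonneg_iff (k + l).succ_ne_zero).1 ?_
  calc 0 ≤ x j + k • q j + l • r j :=
        add_nonneg (add_nonneg (hx j) (nsmul_nonneg (hq j) k)) (nsmul_nonneg (hr j) l)
    _ = (k + l + 1) • p j := congrFun h j

theorem add_sub_add_sub_mem_of_Eext_subset (hn : 2 ≤ n) (hC : Eext n C ⊆ C) {y z v w : Fin d → ℤ}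
    (hx : x ∈ C) (hy : y ∈ C) (hz : z ∈ C) (hv : v ∈ C) (hw : w ∈ C)
    (h : x + (y - v) + (z - w) ∈ NN d) : x + (y - v) + (z - w) ∈ C := by
  have move_eq : x + (y - v) + (z - w) =
      x + ((({y, z} : Multiset (Fin d → ℤ)).map (· - x)).sum -
        (({v, w} : Multiset (Fin d → ℤ)).map (· - x)).sum) := by
    simp only [Multiset.insert_eq_cons, Multiset.map_cons, Multiset.map_singleton,
      Multiset.sum_cons, Multiset.sum_singleton]
    abel
  rw [move_eq] at h ⊢
  exact hC (mem_Eext_of_multiset hx (by simp [hy, hz]) (by simp [hv, hw]) (by simpa) (by simpa) h)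

theorem mem_of_mem_opposite_cone (hn : 2 ≤ n) (hCN : C ⊆ NN d) (hC : Eext n C ⊆ C)
    (hp : p ∈ C) (hq : q ∈ C) (hr : r ∈ C) (hx : x ∈ NN d) {k l : ℕ}
    (h : x + k • p + l • q = (k + l + 1) • r) : x ∈ C := by
  induction hs : k + l using Nat.strong_induction_on generalizing p q r k l with
  | _ s ih =>
  wlog hlk : l ≤ k generalizing p q k l
  · exact this hq hp (by rw [add_right_comm, h, add_comm k l]) (by omega) (by omega)
  obtain rfl | hk := eq_or_ne k 0
  · obtain rfl : l = 0 := by omega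
    obtain rfl : x = r := by simpa using h
    exact hr
  obtain hlk | rfl := hlk.lt_or_eq
  · obtain ⟨i, rfl⟩ := Nat.exists_eq_add_of_lt hlk
    have cone_eq : x + l • q + i • r = (l + i + 1) • (r + (r - p) + (r - r)) := by
      linear_combination h
    have new_nonneg : r + (r - p) + (r - r) ∈ NN d :=
      mem_NN_of_add_nsmul_eq hx (hCN hq) (hCN hr) cone_eq
    exact ih _ (by omega) hq hr
      (add_sub_add_sub_mem_of_Eext_subset hn hC hr hr hr hp hr new_nonneg) cone_eq rfl
  · obtain ⟨i, rfl⟩ := Nat.exists_eq_add_one_of_ne_zero hk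
    have cone_eq : x + i • r + 0 • r = (i + 0 + 1) • (r + (r - p) + (r - q)) := by
      linear_combination h
    have new_nonneg : r + (r - p) + (r - q) ∈ NN d :=
      mem_NN_of_add_nsmul_eq hx (hCN hr) (hCN hr) cone_eq
    exact ih _ (by omega) hr hr
      (add_sub_add_sub_mem_of_Eext_subset hn hC hr hr hr hp hq new_nonneg) cone_eq rfl

theorem mem_of_add_nsmul_eq_add (hn : 2 ≤ n) (hCN : C ⊆ NN d) (hC : Eext n C ⊆ C)
    (hp : p ∈ C) (hq : q ∈ C) (hr : r ∈ C) (hx : x ∈ NN d) {k l : ℕ}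
    (h : x + (k + l + 1) • p = (l + 1) • q + (k + 1) • r) : x ∈ C := by
  have cone_eq : x + k • q + l • r = (k + l + 1) • (q + (r - p) + (r - r)) := by
    linear_combination h
  have new_nonneg : q + (r - p) + (r - r) ∈ NN d :=
    mem_NN_of_add_nsmul_eq hx (hCN hq) (hCN hr) cone_eq
  exact mem_of_mem_opposite_cone hn hCN hC hq hr
    (add_sub_add_sub_mem_of_Eext_subset hn hC hq hr hr hp hr new_nonneg) hx cone_eq

theorem sum_smul_mem_of_Eext_subset (hn : 2 ≤ n) (hCN : C ⊆ NN d) (hC : Eext n C ⊆ C)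
    {t : Fin 3 → Fin d → ℤ} (ht : ∀ i, t i ∈ C) {a : Fin 3 → ℤ} (ha : ∑ i, a i = 1)
    (hx : ∑ i, a i • t i ∈ NN d) : ∑ i, a i • t i ∈ C := by
  wlog hmono : Monotone a generalizing t a
  · let σ := Tuple.sort a
    have sum_comp : ∑ i, (a ∘ σ) i • (t ∘ σ) i = ∑ i, a i • t i :=
      Equiv.sum_comp σ fun i => a i • t i
    rw [← sum_comp] at hx ⊢
    exact this (fun i => ht (σ i)) ((Equiv.sum_comp σ a).trans ha) hx (Tuple.monotone_sort a)
  have h01 : a 0 ≤ a 1 := hmono (by decide)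
  have h12 : a 1 ≤ a 2 := hmono (by decide)
  rw [Fin.sum_univ_three] at ha hx ⊢
  rcases le_or_gt (a 1) 0 with h1 | h1
  · obtain ⟨k, hk⟩ := Int.exists_eq_neg_ofNat (h01.trans h1)
    obtain ⟨l, hl⟩ := Int.exists_eq_neg_ofNat h1
    have h2 : a 2 = k + l + 1 := by omega
    refine mem_of_mem_opposite_cone hn hCN hC (ht 0) (ht 1) (ht 2) hx (k := k) (l := l) ?_
    rw [hk, hl, h2]
    module
  · obtain ⟨k, hk⟩ := Int.eq_succ_of_zero_lt (h1.trans_le h12)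
    obtain ⟨l, hl⟩ := Int.eq_succ_of_zero_lt h1
    have h0 : a 0 = -(k + l + 1) := by omega
    refine mem_of_add_nsmul_eq_add hn hCN hC (ht 0) (ht 1) (ht 2) hx (k := k) (l := l) ?_
    rw [hk, hl, h0]
    module

end

theorem two_completion_three_points_general {d n : ℕ} (hn : 2 ≤ n) {t : Fin 3 → Fin d → ℤ}
    (ht : ∀ i, t i ∈ NN d) :
    EextInf n (Set.range t) = cosetGen (Set.range t) ∩ NN d := by
  apply Set.Subset.antisymm
  · exact Set.subset_inter (EextInf_subset_cosetGen (Set.range_nonempty t)) EextInf_subset_NN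
  · rintro x ⟨hx, hxN⟩
    obtain ⟨a, ha, rfl⟩ := exists_sum_smul_of_mem_cosetGen_range hx
    have range_subset : Set.range t ⊆ EextInf n (Set.range t) :=
      subset_EextInf (Set.range_subset_iff.2 ht)
    exact sum_smul_mem_of_Eext_subset hn EextInf_subset_NN Eext_EextInf_subset
      (fun i => range_subset ⟨i, rfl⟩) ha hxN

/-- For `d ≥ 3` and three affinely independent points in `ℕ₀^d`, the `2`-completion
is `Λ(T) ∩ ℕ₀^d`. -/
theorem two_completion_three_points (d : ℕ) (hd : 3 ≤ d) (t₀ t₁ t₂ : Fin d → ℤ)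
    (h₀ : t₀ ∈ NN d) (h₁ : t₁ ∈ NN d) (h₂ : t₂ ∈ NN d)
    (hind : LinearIndependent ℚ
      ![fun j => ((t₁ - t₀) j : ℚ), fun j => ((t₂ - t₀) j : ℚ)]) :
    EextInf 2 {t₀, t₁, t₂} = cosetGen {t₀, t₁, t₂} ∩ NN d := by
  have range_eq : Set.range ![t₀, t₁, t₂] = {t₀, t₁, t₂} := by
    simp only [Matrix.range_cons, Matrix.range_empty, Set.union_empty, Set.singleton_union]
  rw [← range_eq]
  exact two_completion_three_points_general le_rfl (by simp [Fin.forall_fin_succ, h₀, h₁, h₂])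

end
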